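/- For 2×2 Hermitian PSD matrices S_R, S_E such that S_R − S_E has a positive eigenvalue, the maximum of C_s(Q) = log det(I + QS_R) − log det(I + QS_E) over Q ⪰ 0, Tr(Q) ≤ 1 is attained at some Q* with Tr(Q*) = 1. -/

import Mathlib

open Matrix
open scoped ComplexOrder

section

variable {n : Type*} [Fintype n]

lemma Matrix.IsHermitian.star_mulVec_dotProduct {M : Matrix n n ℂ} (hM : M.IsHermitian)
    (x y : n → ℂ) : star (M *ᵥ x) ⬝ᵥ y = star x ⬝ᵥ (M *ᵥ y) := by
  rw [star_mulVec, hM.eq, dotProduct_mulVec]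

lemma Matrix.PosSemidef.exists_eq_conjTranspose_mul_self {Q : Matrix n n ℂ}
    (hQ : Q.PosSemidef) : ∃ B : Matrix n n ℂ, Q = Bᴴ * B := by
  classical
  open scoped MatrixOrder in
  exact CStarAlgebra.nonneg_iff_eq_star_mul_self.mp hQ.nonneg

lemma Matrix.IsHermitian.exists_dotProduct_mulVec_pos [DecidableEq n] {M : Matrix n n ℂ}
    (hM : M.IsHermitian) {i : n} (hi : 0 < hM.eigenvalues i) :
    ∃ w : n → ℂ, 0 < star w ⬝ᵥ (M *ᵥ w) := by
  refine ⟨⇑(hM.eigenvectorBasis i), ?_⟩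
  have hne : (⇑(hM.eigenvectorBasis i) : n → ℂ) ≠ 0 := fun h ↦
    hM.eigenvectorBasis.orthonormal.ne_zero i (by ext j; exact congrFun h j)
  rw [hM.mulVec_eigenvectorBasis, dotProduct_smul, Complex.real_smul]
  exact mul_pos (by exact_mod_cast hi) (dotProduct_star_self_pos_iff.mpr hne)

/-- The quadratic form of `S (1 + Q S)⁻¹`, the parallel sum of `S` and `Q⁻¹`, at `w + Q r` is at
most `w* S w + r* Q r`. -/
lemma Matrix.PosSemidef.dotProduct_mulVec_le_add {Q S : Matrix n n ℂ} (hQ : Q.PosSemidef)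
    (hS : S.PosSemidef) {u w r : n → ℂ} (h : u + Q *ᵥ (S *ᵥ u) = w + Q *ᵥ r) :
    star (w + Q *ᵥ r) ⬝ᵥ (S *ᵥ u) ≤ star w ⬝ᵥ (S *ᵥ w) + star r ⬝ᵥ (Q *ᵥ r) := by
  obtain ⟨d, rfl⟩ : ∃ d, r = S *ᵥ u - d := ⟨S *ᵥ u - r, by simp⟩
  obtain rfl : w = u + Q *ᵥ d := by
    rw [mulVec_sub] at h
    linear_combination -h
  have h₁ := hS.dotProduct_mulVec_nonneg (Q *ᵥ d)
  have h₂ := hQ.dotProduct_mulVec_nonneg d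
  rw [← sub_nonneg]
  convert add_nonneg h₁ h₂ using 1
  simp only [star_add, star_sub, add_dotProduct, sub_dotProduct, mulVec_add, mulVec_sub,
    dotProduct_add, dotProduct_sub, hQ.isHermitian.star_mulVec_dotProduct,
    hS.isHermitian.star_mulVec_dotProduct]
  ring

lemma Matrix.isCompact_setOf_trace_conjTranspose_mul_self_eq_one :
    IsCompact {B : Matrix n n ℂ | (Bᴴ * B).trace = 1} := by
  have hbox : IsCompact (Set.univ.pi fun _ : n ↦ Set.univ.pi fun _ : n ↦
      Metric.closedBall (0 : ℂ) 1) :=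
    isCompact_univ_pi fun _ ↦ isCompact_univ_pi fun _ ↦ isCompact_closedBall 0 1
  refine IsCompact.of_isClosed_subset hbox (isClosed_eq (by fun_prop) continuous_const) ?_
  intro B hB i _ j _
  have hsum : ∑ k, ∑ l, ‖B l k‖ ^ 2 = 1 := by
    have : (Bᴴ * B).trace = ((∑ k, ∑ l, ‖B l k‖ ^ 2 : ℝ) : ℂ) := by
      simp [trace, mul_apply, Complex.conj_mul']
    rw [Set.mem_ofPred_eq, this] at hB
    exact_mod_cast hB
  have h₁ : ‖B i j‖ ^ 2 ≤ ∑ l, ‖B l j‖ ^ 2 :=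
    Finset.single_le_sum (f := fun l ↦ ‖B l j‖ ^ 2) (fun _ _ ↦ sq_nonneg _) (Finset.mem_univ i)
  have h₂ : ∑ l, ‖B l j‖ ^ 2 ≤ ∑ k, ∑ l, ‖B l k‖ ^ 2 :=
    Finset.single_le_sum (f := fun k ↦ ∑ l, ‖B l k‖ ^ 2)
      (fun _ _ ↦ Finset.sum_nonneg fun _ _ ↦ sq_nonneg _) (Finset.mem_univ j)
  rw [mem_closedBall_zero_iff]
  nlinarith [norm_nonneg (B i j)]

variable [DecidableEq n]

lemma Matrix.PosSemidef.det_one_add_mul_pos {Q S : Matrix n n ℂ} (hQ : Q.PosSemidef)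
    (hS : S.PosSemidef) : 0 < (1 + Q * S).det := by
  obtain ⟨B, rfl⟩ := hQ.exists_eq_conjTranspose_mul_self
  rw [Matrix.mul_assoc, det_one_add_mul_comm]
  exact (PosDef.one.add_posSemidef (hS.mul_mul_conjTranspose_same B)).det_pos

lemma Matrix.PosSemidef.det_one_add_mul_re_pos {Q S : Matrix n n ℂ} (hQ : Q.PosSemidef)
    (hS : S.PosSemidef) : 0 < (1 + Q * S).det.re :=
  (Complex.pos_iff.mp (hQ.det_one_add_mul_pos hS)).1

lemma Matrix.det_one_add_add_vecMulVec_mul (Q S : Matrix n n ℂ) (s : ℂ) {u v : n → ℂ}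
    (h : (1 + Q * S) *ᵥ u = v) :
    (1 + (Q + s • vecMulVec v (star v)) * S).det =
      (1 + Q * S).det * (1 + s * (star v ⬝ᵥ (S *ᵥ u))) := by
  have hfac : 1 + (Q + s • vecMulVec v (star v)) * S =
      (1 + Q * S) * (1 + vecMulVec (s • u) (star v ᵥ* S)) := by
    rw [Matrix.mul_add, Matrix.mul_one, mul_vecMulVec, mulVec_smul, h, Matrix.add_mul,
      Matrix.smul_mul, vecMulVec_mul, smul_vecMulVec, add_assoc]
  rw [hfac, det_mul, vecMulVec_eq Unit, det_one_add_replicateCol_mul_replicateRow,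
    dotProduct_smul, smul_eq_mul, dotProduct_mulVec]

/-- The secrecy rate does not decrease when the remaining power is spent on a suitable beam. -/
lemma Matrix.PosSemidef.exists_trace_eq_one_log_det_sub_le {S_R S_E Q : Matrix n n ℂ}
    (hQ : Q.PosSemidef) (hR : S_R.PosSemidef) (hE : S_E.PosSemidef) {w : n → ℂ}
    (hw : 0 < star w ⬝ᵥ ((S_R - S_E) *ᵥ w)) (htr : Q.trace.re ≤ 1) :
    ∃ Q' : Matrix n n ℂ, Q'.PosSemidef ∧ Q'.trace = 1 ∧
      Real.log ((1 + Q * S_R).det.re) - Real.log ((1 + Q * S_E).det.re)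
        ≤ Real.log ((1 + Q' * S_R).det.re) - Real.log ((1 + Q' * S_E).det.re) := by
  have hDR := hQ.det_one_add_mul_pos hR
  have hDE := hQ.det_one_add_mul_pos hE
  set v := (1 + Q * S_R) *ᵥ w with hv
  have hv0 : v ≠ 0 := fun h ↦ by
    have := eq_zero_of_mulVec_eq_zero hDR.ne' h
    simp [this] at hw
  obtain ⟨u, hu⟩ : ∃ u, (1 + Q * S_E) *ᵥ u = v :=
    ⟨(1 + Q * S_E)⁻¹ *ᵥ v, by
      rw [mulVec_mulVec, mul_nonsing_inv _ (isUnit_iff_ne_zero.mpr hDE.ne'), one_mulVec]⟩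
  have hvv : 0 < v ⬝ᵥ star v := by
    rw [dotProduct_comm]
    exact dotProduct_star_self_pos_iff.mpr hv0
  have htr' : Q.trace ≤ 1 := by
    have := Complex.nonneg_iff.mp hQ.trace_nonneg
    exact Complex.le_def.mpr ⟨htr, this.2.symm⟩
  set s : ℂ := (1 - Q.trace) / (v ⬝ᵥ star v) with hs
  have hs0 : 0 ≤ s := div_nonneg (sub_nonneg.mpr htr') hvv.le
  have hQ' : (Q + s • vecMulVec v (star v)).PosSemidef :=
    hQ.add ((posSemidef_vecMulVec_self_star v).smul hs0)
  refine ⟨_, hQ', ?_, ?_⟩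
  · rw [trace_add, trace_smul, trace_vecMulVec, smul_eq_mul, hs, div_mul_cancel₀ _ hvv.ne']
    ring
  have hle : star v ⬝ᵥ (S_E *ᵥ u) ≤ star v ⬝ᵥ (S_R *ᵥ w) := by
    have hv' : v = w + Q *ᵥ (S_R *ᵥ w) := by
      rw [hv, add_mulVec, one_mulVec, mulVec_mulVec]
    have hu' : u + Q *ᵥ (S_E *ᵥ u) = w + Q *ᵥ (S_R *ᵥ w) := by
      rw [← hv', ← hu, add_mulVec, one_mulVec, mulVec_mulVec]
    have hsplit := hQ.dotProduct_mulVec_le_add hE hu'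
    rw [← hv'] at hsplit
    refine hsplit.trans ?_
    rw [sub_mulVec, dotProduct_sub] at hw
    rw [hv', star_add, add_dotProduct, hQ.isHermitian.star_mulVec_dotProduct]
    exact add_le_add_left (sub_pos.mp hw).le _
  have hER := hQ'.det_one_add_mul_pos hE
  have hRR := hQ'.det_one_add_mul_pos hR
  rw [det_one_add_add_vecMulVec_mul Q S_E s hu] at hER ⊢
  rw [det_one_add_add_vecMulVec_mul Q S_R s hv.symm] at hRR ⊢
  have hfac := add_le_add_right (mul_le_mul_of_nonneg_left hle hs0) 1
  have hE1 := (mul_pos_iff_of_pos_left hDE).mp hER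
  have hR1 := (mul_pos_iff_of_pos_left hDR).mp hRR
  rw [Complex.pos_iff] at hE1 hR1 hDR hDE
  rw [Complex.mul_re, Complex.mul_re, ← hDR.2, ← hDE.2, zero_mul, zero_mul, sub_zero, sub_zero,
    Real.log_mul hDR.1.ne' hR1.1.ne', Real.log_mul hDE.1.ne' hE1.1.ne']
  linarith [Real.log_le_log hE1.1 (Complex.le_def.mp hfac).1]

lemma Matrix.PosSemidef.continuous_log_det_one_add_conjTranspose_mul_self_mul
    {S : Matrix n n ℂ} (hS : S.PosSemidef) :
    Continuous fun B : Matrix n n ℂ ↦ Real.log ((1 + Bᴴ * B * S).det.re) := by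
  have hdet : Continuous fun B : Matrix n n ℂ ↦ (1 + Bᴴ * B * S).det :=
    (continuous_const.add ((continuous_id.matrix_conjTranspose.matrix_mul
      continuous_id).matrix_mul continuous_const)).matrix_det
  exact (Complex.continuous_re.comp hdet).log fun B ↦
    ((posSemidef_conjTranspose_mul_self B).det_one_add_mul_re_pos hS).ne'

end

theorem stmt_16 (S_R S_E : Matrix (Fin 2) (Fin 2) ℂ)
    (hR : S_R.PosSemidef) (hE : S_E.PosSemidef)
    (hpos : ∃ i, 0 < (hR.isHermitian.sub hE.isHermitian).eigenvalues i) :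
    ∃ Qs : Matrix (Fin 2) (Fin 2) ℂ, Qs.PosSemidef ∧ Qs.trace = 1 ∧
      ∀ Q : Matrix (Fin 2) (Fin 2) ℂ, Q.PosSemidef → Q.trace.re ≤ 1 →
        Real.log ((1 + Q * S_R).det.re) - Real.log ((1 + Q * S_E).det.re)
          ≤ Real.log ((1 + Qs * S_R).det.re) - Real.log ((1 + Qs * S_E).det.re) := by
  obtain ⟨i, hi⟩ := hpos
  obtain ⟨w, hw⟩ := (hR.isHermitian.sub hE.isHermitian).exists_dotProduct_mulVec_pos hi
  have hne : {B : Matrix (Fin 2) (Fin 2) ℂ | (Bᴴ * B).trace = 1}.Nonempty := by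
    obtain ⟨Q, hQ, htr, -⟩ :=
      PosSemidef.zero.exists_trace_eq_one_log_det_sub_le hR hE hw (by simp)
    obtain ⟨B, rfl⟩ := hQ.exists_eq_conjTranspose_mul_self
    exact ⟨B, htr⟩
  obtain ⟨Bs, hBs, hmax⟩ :=
    isCompact_setOf_trace_conjTranspose_mul_self_eq_one.exists_isMaxOn hne
      (hR.continuous_log_det_one_add_conjTranspose_mul_self_mul.sub
        hE.continuous_log_det_one_add_conjTranspose_mul_self_mul).continuousOn
  refine ⟨Bsᴴ * Bs, posSemidef_conjTranspose_mul_self Bs, hBs, fun Q hQ htr ↦ ?_⟩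
  obtain ⟨Q', hQ', htr', hle⟩ := hQ.exists_trace_eq_one_log_det_sub_le hR hE hw htr
  obtain ⟨B, rfl⟩ := hQ'.exists_eq_conjTranspose_mul_self
  exact hle.trans (hmax htr')
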